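/- arXiv:1603.06752 — 2 statements merged into one kernel-verified Lean document; each statement's English description precedes it below -/
import Mathlib

section
/- Let α ∈ U(m) be a unitary matrix satisfying ε·α = αᵗ·ε, where ε ∈ U(m) is skew-symmetric (ε = -εᵗ, unitary). Then every eigenvalue of α has even multiplicity (Kramers degeneracy). In particular m is even. -/
/-!
The form `B(w, v) = wᵀ ε v` is skew-symmetric, so it is enough to see that it is nondegenerate on
each eigenspace `E` of `α`: a Gram matrix `A` of odd size `n` with `Aᵀ = -A` has
`det A = (-1)ⁿ det A = -det A`, hence `det A = 0` (`even_card_of_transpose_eq_neg`).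

Nondegeneracy on `E` is the Kramers argument: the antiunitary map `v ↦ conj (ε v)` preserves `E`
(`timeReversal_mem_eigenspace`), and pairing `v` with its image gives `‖ε v‖² = ‖v‖²`.
The parity of `m` is the determinant argument applied to `ε` itself.
-/

open Matrix in
theorem even_card_of_transpose_eq_neg {ι : Type*} [Fintype ι] [DecidableEq ι]
    (A : Matrix ι ι ℂ) (hA : Aᵀ = -A) (hdet : A.det ≠ 0) : Even (Fintype.card ι) := by
  by_contra h
  rw [Nat.not_even_iff_odd] at h
  have h1 : A.det = -A.det := by
    conv_lhs => rw [← Matrix.det_transpose, hA, Matrix.det_neg, h.neg_one_pow, neg_one_mul]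
  exact hdet (self_eq_neg.mp h1)

theorem even_finrank_of_skew {V : Type*} [AddCommGroup V] [Module ℂ V] [FiniteDimensional ℂ V]
    (B : LinearMap.BilinForm ℂ V) (hB : ∀ x y, B x y = -B y x) (hnd : B.Nondegenerate) :
    Even (Module.finrank ℂ V) := by
  have h := even_card_of_transpose_eq_neg
    (LinearMap.BilinForm.toMatrix (Module.finBasis ℂ V) B)
    (by ext i j; simp [LinearMap.BilinForm.toMatrix_apply, hB (Module.finBasis ℂ V j)])
    ((LinearMap.BilinForm.nondegenerate_iff_det_ne_zero _).mp hnd)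
  simpa using h

open scoped ComplexOrder in
theorem eq_zero_of_star_dotProduct_self {n : Type*} [Fintype n] {v : n → ℂ}
    (h : dotProduct (star v) v = 0) : v = 0 :=
  dotProduct_star_self_eq_zero.mp h

open Matrix in
/-- The time-reversal operator `v ↦ conj (ε v)` preserves the eigenspaces of `α`: applying `ε` turns
an eigenvector of `α` into one of `αᵀ`, conjugation turns that into an eigenvector of `α⁻¹ = αᴴ`
with eigenvalue `conj μ`, and `conj μ = μ⁻¹` because `α` is unitary. -/
theorem timeReversal_mem_eigenspace {m : ℕ} (α ε : Matrix (Fin m) (Fin m) ℂ)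
    (hα : α ∈ Matrix.unitaryGroup (Fin m) ℂ) (hTRS : ε * α = αᵀ * ε) {μ : ℂ} {v : Fin m → ℂ}
    (hv : α *ᵥ v = μ • v) : α *ᵥ star (ε *ᵥ v) = μ • star (ε *ᵥ v) := by
  by_cases hv0 : v = 0
  · simp [hv0]
  have hμ : star μ * μ = 1 := by
    have h1 : star (α *ᵥ v) ⬝ᵥ (α *ᵥ v) = star v ⬝ᵥ v := by
      rw [star_mulVec, ← dotProduct_mulVec, mulVec_mulVec, ← star_eq_conjTranspose,
        Matrix.mem_unitaryGroup_iff'.mp hα, one_mulVec]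
    rw [hv, star_smul, smul_dotProduct, dotProduct_smul, smul_smul, smul_eq_mul] at h1
    exact mul_right_cancel₀ (mt eq_zero_of_star_dotProduct_self hv0) (h1.trans (one_mul _).symm)
  have h2 : αᵀ *ᵥ (ε *ᵥ v) = μ • (ε *ᵥ v) := by
    rw [mulVec_mulVec, ← hTRS, ← mulVec_mulVec, hv, mulVec_smul]
  have h3 : αᴴ *ᵥ star (ε *ᵥ v) = star μ • star (ε *ᵥ v) := by
    rw [← star_smul, ← h2, star_mulVec αᵀ, ← mulVec_transpose]
    rfl
  have h4 : star (ε *ᵥ v) = star μ • (α *ᵥ star (ε *ᵥ v)) := by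
    rw [← mulVec_smul, ← h3, mulVec_mulVec, ← star_eq_conjTranspose,
      Matrix.mem_unitaryGroup_iff.mp hα, one_mulVec]
  conv_rhs => rw [h4, smul_smul, mul_comm μ, hμ, one_smul]

/-- Kramers degeneracy: if `α ∈ U(m)` satisfies `ε·α = αᵀ·ε` with `ε`
unitary and skew-symmetric, then every eigenvalue of `α` has even multiplicity;
in particular `m` is even. -/
theorem statement3 {m : ℕ} (α ε : Matrix (Fin m) (Fin m) ℂ)
    (hα : α ∈ Matrix.unitaryGroup (Fin m) ℂ)
    (hε : ε ∈ Matrix.unitaryGroup (Fin m) ℂ)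
    (hskew : ε.transpose = -ε)
    (hTRS : ε * α = α.transpose * ε) :
    (∀ μ : ℂ,
      Even (Module.finrank ℂ (Module.End.eigenspace (Matrix.toLin' α) μ))) ∧
    Even m := by
  have hdet : ε.det ≠ 0 :=
    Matrix.det_ne_zero_of_left_inverse (Matrix.mem_unitaryGroup_iff'.mp hε)
  refine ⟨fun μ => ?_, by simpa using even_card_of_transpose_eq_neg ε hskew hdet⟩
  refine even_finrank_of_skew
    ((Matrix.toBilin' ε).restrict (Module.End.eigenspace (Matrix.toLin' α) μ)) ?_ ?_
  · rintro ⟨x, -⟩ ⟨y, -⟩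
    change Matrix.toBilin' ε x y = -Matrix.toBilin' ε y x
    rw [Matrix.toBilin'_apply', Matrix.toBilin'_apply', Matrix.dotProduct_mulVec,
      ← Matrix.mulVec_transpose, hskew, Matrix.neg_mulVec, neg_dotProduct, dotProduct_comm]
  · refine LinearMap.BilinForm.Nondegenerate.ofSeparatingRight ?_
    rintro ⟨v, hv⟩ h
    rw [Module.End.mem_eigenspace_iff, Matrix.toLin'_apply] at hv
    have hw : star (ε.mulVec v) ∈ Module.End.eigenspace (Matrix.toLin' α) μ := by
      rw [Module.End.mem_eigenspace_iff, Matrix.toLin'_apply]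
      exact timeReversal_mem_eigenspace α ε hα hTRS hv
    have h0 : Matrix.toBilin' ε (star (ε.mulVec v)) v = 0 := h ⟨_, hw⟩
    rw [Matrix.toBilin'_apply'] at h0
    exact Subtype.ext
      (Matrix.eq_zero_of_mulVec_eq_zero hdet (eq_zero_of_star_dotProduct_self h0))
end

section
/- Let α : ℝ → U(m) be continuous, ℤ-periodic, and TRS (ε·α(k) = α(-k)ᵗ·ε with ε unitary skew-symmetric). Then there exists a continuous ℤ-periodic family γ : ℝ → U(m) such that α(k) = ε⁻¹·γ(-k)ᵗ·ε·γ(k) for all k. Conversely, for any continuous ℤ-periodic γ : ℝ → U(m), the family α(k) := ε⁻¹·γ(-k)ᵗ·ε·γ(k) is continuous, ℤ-periodic, and TRS. -/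
open Matrix

/-!
Write `τ x = ε⁻¹xᵀε`, an anti-automorphism of `U(m)` which is an involution because `ε` is
skew-symmetric. The TRS condition reads `τ (α(-k)) = α(k)`, and the factorization sought is
`α(k) = τ (γ(-k)) γ(k)`. The converse half is a direct computation.

For the direct half, the equation can be used to *define* `γ` on `[-1/2, 0]` from its values on
`[0, 1/2]`. Both definitions of `γ(0)`, and the values of `γ` at `±1/2`, agree exactly when
`α(0) = τ (γ(0)) γ(0)` and `α(1/2) = τ (γ(1/2)) γ(1/2)`; then `γ` extends periodically. At these two
points `α` is fixed by `τ`. A unitary fixed by `τ` has a unitary square root which is a polynomial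
in it, hence is fixed by `τ` as well, and this root solves the endpoint equation. Moreover the
root is joined to `1` by unitaries (`exists_path_to_sqrt`), which gives a path on `[0, 1/2]` between
the two endpoint values. No normal form for skew-symmetric unitary matrices is needed.
-/

section SquareRoot

open scoped Matrix.Norms.L2Operator

/-- Every function of a normal matrix (in the sense of the functional calculus) agrees with a polynomial,
by interpolation on the finite spectrum. -/
lemma exists_aeval_eq_cfc {m : ℕ} (a : Matrix (Fin m) (Fin m) ℂ) [IsStarNormal a] (f : ℂ → ℂ) :
    ∃ r : Polynomial ℂ, cfc f a = Polynomial.aeval a r := by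
  have hfin : (spectrum ℂ a).Finite := a.finite_spectrum
  refine ⟨Lagrange.interpolate hfin.toFinset id f, ?_⟩
  rw [← cfc_polynomial _ a]
  refine cfc_congr fun z hz => ?_
  exact (Lagrange.eval_interpolate_at_node f (v := id) Function.injective_id.injOn
    (hfin.mem_toFinset.2 hz)).symm

lemma mul_aeval_eq_transpose_mul {m : ℕ} {ε a : Matrix (Fin m) (Fin m) ℂ}
    (h : ε * a = aᵀ * ε) (r : Polynomial ℂ) :
    ε * Polynomial.aeval a r = (Polynomial.aeval a r)ᵀ * ε := by
  have hpow : ∀ n : ℕ, ε * a ^ n = (a ^ n)ᵀ * ε := by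
    intro n
    induction n with
    | zero => simp
    | succ n ih =>
      rw [pow_succ, ← mul_assoc, ih, mul_assoc, h, ← mul_assoc, ← transpose_mul, ← pow_succ',
        ← pow_succ]
  induction r using Polynomial.induction_on' with
  | add p q hp hq => simp [mul_add, add_mul, hp, hq]
  | monomial n c => simp [Polynomial.aeval_monomial, Algebra.algebraMap_eq_smul_one, hpow]

/-- A unitary `a` fixed by the involution `x ↦ ε⁻¹xᵀε` has a unitary square root with the same
property, joined to `1` by a path of unitaries: with `a = exp(ih)` and `h` the Hermitian matrix
`arg a`, the path is `exp(ith/2)`. -/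
lemma exists_path_to_sqrt {m : ℕ} {ε a : Matrix (Fin m) (Fin m) ℂ}
    (ha : a ∈ unitaryGroup (Fin m) ℂ) (h : ε * a = aᵀ * ε) :
    ∃ p : ℝ → Matrix (Fin m) (Fin m) ℂ, Continuous p ∧ (∀ t, p t ∈ unitaryGroup (Fin m) ℂ) ∧
      p 0 = 1 ∧ ε * p 1 = (p 1)ᵀ * ε ∧ p 1 * p 1 = a := by
  have hn : IsStarNormal a := by
    refine ⟨?_⟩
    rw [Commute, SemiconjBy, mem_unitaryGroup_iff.1 ha, mem_unitaryGroup_iff'.1 ha]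
  have hfin : (spectrum ℂ a).Finite := a.finite_spectrum
  have hc : ∀ f : ℂ → ℂ, ContinuousOn f (spectrum ℂ a) := fun f => hfin.continuousOn f
  have hsa : IsSelfAdjoint (cfc (fun z : ℂ => (((Complex.arg z / 2 : ℝ)) : ℂ)) a) := by
    rw [IsSelfAdjoint, ← cfc_star]
    refine cfc_congr fun z _ => ?_
    simp only [Complex.star_def, Complex.conj_ofReal]
  let b : selfAdjoint (Matrix (Fin m) (Fin m) ℂ) := ⟨_, hsa⟩
  have hexp : (selfAdjoint.expUnitary b : Matrix (Fin m) (Fin m) ℂ) =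
      cfc (fun z : ℂ => Complex.exp (Complex.I * ((Complex.arg z / 2 : ℝ) : ℂ))) a := by
    rw [selfAdjoint.expUnitary_coe]
    change NormedSpace.exp (Complex.I • cfc (fun z : ℂ => (((Complex.arg z / 2 : ℝ)) : ℂ)) a) = _
    rw [← cfc_smul _ _ _ (hc _), ← CFC.exp_eq_normedSpace_exp (𝕜 := ℂ),
      ← cfc_comp' _ _ _ (hg := ?_) (hf := hc _), ← Complex.exp_eq_exp_ℂ]
    · rfl
    · rw [← Complex.exp_eq_exp_ℂ]
      exact Complex.continuous_exp.continuousOn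
  refine ⟨fun t => selfAdjoint.expUnitary (t • b), ?_, fun t => (selfAdjoint.expUnitary _).2,
    ?_, ?_, ?_⟩
  · exact continuous_subtype_val.comp (selfAdjoint.continuous_expUnitary.comp (by fun_prop))
  · simp
  · simp only [one_smul, hexp]
    obtain ⟨r, hr⟩ := exists_aeval_eq_cfc a
      (fun z : ℂ => Complex.exp (Complex.I * ((Complex.arg z / 2 : ℝ) : ℂ)))
    rw [hr]
    exact mul_aeval_eq_transpose_mul h r
  · simp only [one_smul, hexp]
    rw [← cfc_mul _ _ a (hc _) (hc _)]
    conv_rhs => rw [← cfc_id' ℂ a]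
    refine cfc_congr fun z hz => ?_
    have hz1 : ‖z‖ = 1 := by
      simpa using spectrum.subset_circle_of_unitary ha hz
    have := Complex.norm_mul_exp_arg_mul_I z
    rw [hz1] at this
    simp only [← Complex.exp_add]
    convert this using 1
    push_cast
    rw [one_mul]
    congr 1
    ring

end SquareRoot

/-- A continuous function on `[-1/2, 1/2]` with equal values at the endpoints has a continuous
`ℤ`-periodic extension. -/
lemma exists_periodic_extension {X : Type*} [TopologicalSpace X] {f : ℝ → X} (hf : Continuous f)
    (hends : f (-(1 / 2)) = f (1 / 2)) :
    ∃ g : ℝ → X, Continuous g ∧ (∀ k, g (k + 1) = g k) ∧ ∀ x, |x| ≤ 1 / 2 → g x = f x := by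
  have hend' : f (-(1 / 2)) = f (-(1 / 2) + 1) := by rw [hends]; norm_num
  have hper : ∀ k : ℝ, AddCircle.liftIco 1 (-(1 / 2)) f ((k + 1 : ℝ) : AddCircle (1 : ℝ)) =
      AddCircle.liftIco 1 (-(1 / 2)) f (k : AddCircle (1 : ℝ)) := by
    intro k
    rw [AddCircle.coe_add, AddCircle.coe_period, add_zero]
  refine ⟨fun k => AddCircle.liftIco 1 (-(1 / 2)) f (k : AddCircle (1 : ℝ)),
    (AddCircle.liftIco_continuous hend' hf.continuousOn).comp (AddCircle.continuous_mk' 1),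
    hper, fun x hx => ?_⟩
  obtain ⟨h1, h2⟩ := abs_le.1 hx
  rcases h2.lt_or_eq with h2 | rfl
  · exact AddCircle.liftIco_coe_apply ⟨h1, by linarith⟩
  · have := hper (-(1 / 2))
    rw [show (-(1 / 2) + 1 : ℝ) = 1 / 2 by norm_num] at this
    simp only [this]
    rw [AddCircle.liftIco_coe_apply ⟨le_rfl, by norm_num⟩, hends]

lemma transpose_mem_unitaryGroup {m : ℕ} {u : Matrix (Fin m) (Fin m) ℂ}
    (hu : u ∈ unitaryGroup (Fin m) ℂ) : uᵀ ∈ unitaryGroup (Fin m) ℂ := by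
  rw [mem_unitaryGroup_iff, star_eq_conjTranspose, show uᵀᴴ = uᴴᵀ from rfl,
    ← transpose_mul, ← star_eq_conjTranspose, mem_unitaryGroup_iff'.1 hu, transpose_one]

/-- The direct half of the theorem, with the factorization cleared of `ε⁻¹`. -/
lemma exists_factor {m : ℕ} {ε : Matrix (Fin m) (Fin m) ℂ}
    (hε : ε ∈ unitaryGroup (Fin m) ℂ) (hskew : εᵀ = -ε)
    {α : ℝ → Matrix (Fin m) (Fin m) ℂ} (hc : Continuous α)
    (hu : ∀ k, α k ∈ unitaryGroup (Fin m) ℂ) (hp : ∀ k, α (k + 1) = α k)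
    (ht : ∀ k, ε * α k = (α (-k))ᵀ * ε) :
    ∃ γ : ℝ → Matrix (Fin m) (Fin m) ℂ, Continuous γ ∧
      (∀ k, γ k ∈ unitaryGroup (Fin m) ℂ) ∧ (∀ k, γ (k + 1) = γ k) ∧
      ∀ k, ε * α k = (γ (-k))ᵀ * ε * γ k := by
  have hh : α (-(1 / 2)) = α (1 / 2) := by rw [← hp]; norm_num
  obtain ⟨p, hpc, hpu, hp0, hp1, hpp⟩ := exists_path_to_sqrt (hu 0) (by simpa using ht 0)
  obtain ⟨q, hqc, hqu, hq0, hq1, hqq⟩ := exists_path_to_sqrt (hu (1 / 2))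
    (by simpa only [hh] using ht (1 / 2))
  have hεε' := mem_unitaryGroup_iff'.1 hε
  have hεε := mem_unitaryGroup_iff.1 hε
  -- `G` is the path prescribed on `[0, 1/2]`; `H s` is the value forced on `γ (-s)`.
  let G : ℝ → Matrix (Fin m) (Fin m) ℂ := fun s => p (1 - 2 * s) * q (2 * s)
  let H : ℝ → Matrix (Fin m) (Fin m) ℂ := fun s => (ε * α s * star (G s) * star ε)ᵀ
  have hGc : Continuous G := by fun_prop
  have hHc : Continuous H := by fun_prop
  have hGu : ∀ s, G s ∈ unitaryGroup (Fin m) ℂ := fun s => mul_mem (hpu _) (hqu _)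
  have hHu : ∀ s, H s ∈ unitaryGroup (Fin m) ℂ := fun s =>
    transpose_mem_unitaryGroup
      (mul_mem (mul_mem (mul_mem hε (hu s)) (Unitary.star_mem (hGu s))) (Unitary.star_mem hε))
  have hHG : ∀ s, ε * α s = (H s)ᵀ * ε * G s := by
    intro s
    simp only [H, transpose_transpose]
    rw [mul_assoc _ (star ε) ε, hεε', mul_one, mul_assoc, mem_unitaryGroup_iff'.1 (hGu s), mul_one]
  -- The forced value agrees with `G` wherever `G s` is a square root of `α s` fixed by the
  -- involution.
  have hfix : ∀ s, ε * G s = (G s)ᵀ * ε → G s * G s = α s → H s = G s := by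
    intro s h1 h2
    simp only [H]
    rw [← h2, mul_assoc ε, mul_assoc (G s), mem_unitaryGroup_iff.1 (hGu s), mul_one, h1, mul_assoc,
      hεε, mul_one, transpose_transpose]
  have hG0 : G 0 = p 1 := by simp [G, hq0]
  have hG1 : G (1 / 2) = q 1 := by simp [G, hp0]
  have hH0 : H 0 = G 0 := hfix 0 (by rw [hG0, hp1]) (by rw [hG0, hpp])
  have hH1 : H (1 / 2) = G (1 / 2) := hfix _ (by rw [hG1, hq1]) (by rw [hG1, hqq])
  let f : ℝ → Matrix (Fin m) (Fin m) ℂ := fun x => if 0 ≤ x then G x else H (-x)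
  have hfpos : ∀ x, 0 ≤ x → f x = G x := fun x hx => if_pos hx
  have hfneg : ∀ x, 0 ≤ x → f (-x) = H x := by
    intro x hx
    rcases hx.eq_or_lt with rfl | hx
    · rw [neg_zero, hfpos 0 le_rfl, hH0]
    · simp only [f, if_neg (not_le.2 (neg_lt_zero.2 hx)), neg_neg]
  have hfc : Continuous f := by
    refine Continuous.if_le hGc (hHc.comp continuous_neg) continuous_const continuous_id ?_
    rintro x rfl
    simp [hH0]
  have hfu : ∀ x, f x ∈ unitaryGroup (Fin m) ℂ := by
    intro x
    simp only [f]
    split_ifs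
    exacts [hGu _, hHu _]
  obtain ⟨γ, hγc, hγp, hγf⟩ := exists_periodic_extension hfc
    (by rw [hfneg _ (by norm_num), hfpos _ (by norm_num), hH1])
  have hγP : Function.Periodic γ 1 := hγp
  have hαP : Function.Periodic α 1 := hp
  have hred : ∀ {g : ℝ → Matrix (Fin m) (Fin m) ℂ}, Function.Periodic g 1 → ∀ k : ℝ,
      g k = g (k - round k) := fun hg k => by
    simpa using (hg.sub_int_mul_eq (x := k) (round k)).symm
  have hpos : ∀ x, 0 ≤ x → x ≤ 1 / 2 → ε * α x = (γ (-x))ᵀ * ε * γ x := by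
    intro x h0 h1
    rw [hγf x (by rwa [abs_of_nonneg h0]), hγf (-x) (by rwa [abs_neg, abs_of_nonneg h0]),
      hfpos x h0, hfneg x h0, hHG]
  have hloc : ∀ x, |x| ≤ 1 / 2 → ε * α x = (γ (-x))ᵀ * ε * γ x := by
    intro x hx
    rcases le_total 0 x with h0 | h0
    · exact hpos x h0 (by rwa [abs_of_nonneg h0] at hx)
    · -- Transposing the identity at `-x` gives the one at `x`, since `α` is TRS.
      have h := congrArg transpose (hpos (-x) (by linarith) (by rwa [abs_of_nonpos h0] at hx))
      simp only [transpose_mul, transpose_transpose, hskew, neg_neg, mul_neg, neg_mul,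
        neg_inj] at h
      rw [ht x, h, mul_assoc]
  refine ⟨γ, hγc, fun k => ?_, hγp, fun k => ?_⟩
  · rw [hred hγP k, hγf _ (abs_sub_round k)]
    exact hfu _
  · have h := hloc _ (abs_sub_round k)
    have hneg : γ (-(k - round k)) = γ (-k) := by
      rw [neg_sub, sub_eq_add_neg, add_comm]
      simpa using hγP.int_mul (round k) (-k)
    rwa [← hred hαP, ← hred hγP, hneg] at h

/-- a continuous `ℤ`-periodic TRS family `α : ℝ → U(m)` factorizes as
`α(k) = ε⁻¹·γ(-k)ᵀ·ε·γ(k)` with `γ : ℝ → U(m)` continuous and `ℤ`-periodic; and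
conversely any such `γ` defines a continuous `ℤ`-periodic TRS family. -/
theorem statement7 {m : ℕ} (ε : Matrix (Fin m) (Fin m) ℂ)
    (hε : ε ∈ Matrix.unitaryGroup (Fin m) ℂ)
    (hskew : εᵀ = -ε) :
    (∀ α : ℝ → Matrix (Fin m) (Fin m) ℂ, Continuous α →
      (∀ k, α k ∈ Matrix.unitaryGroup (Fin m) ℂ) →
      (∀ k, α (k + 1) = α k) →
      (∀ k, ε * α k = (α (-k))ᵀ * ε) →
      ∃ γ : ℝ → Matrix (Fin m) (Fin m) ℂ, Continuous γ ∧
        (∀ k, γ k ∈ Matrix.unitaryGroup (Fin m) ℂ) ∧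
        (∀ k, γ (k + 1) = γ k) ∧
        (∀ k, α k = ε⁻¹ * (γ (-k))ᵀ * ε * γ k)) ∧
    (∀ γ : ℝ → Matrix (Fin m) (Fin m) ℂ, Continuous γ →
      (∀ k, γ k ∈ Matrix.unitaryGroup (Fin m) ℂ) →
      (∀ k, γ (k + 1) = γ k) →
      (Continuous (fun k => ε⁻¹ * (γ (-k))ᵀ * ε * γ k) ∧
        (∀ k, ε⁻¹ * (γ (-(k + 1)))ᵀ * ε * γ (k + 1) = ε⁻¹ * (γ (-k))ᵀ * ε * γ k) ∧
        (∀ k, ε⁻¹ * (γ (-k))ᵀ * ε * γ k ∈ Matrix.unitaryGroup (Fin m) ℂ) ∧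
        (∀ k, ε * (ε⁻¹ * (γ (-k))ᵀ * ε * γ k) =
          (ε⁻¹ * (γ (-(-k)))ᵀ * ε * γ (-k))ᵀ * ε))) := by
  have hεε : ε * ε⁻¹ = 1 := mul_nonsing_inv _ ((isUnit_iff_isUnit_det _).1
    (IsUnit.of_mul_eq_one _ (mem_unitaryGroup_iff.1 hε)))
  have hεε' : ε⁻¹ * ε = 1 := nonsing_inv_mul _ ((isUnit_iff_isUnit_det _).1
    (IsUnit.of_mul_eq_one _ (mem_unitaryGroup_iff.1 hε)))
  have hinv : ε⁻¹ ∈ unitaryGroup (Fin m) ℂ := by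
    rw [inv_eq_right_inv (mem_unitaryGroup_iff.1 hε)]
    exact Unitary.star_mem hε
  refine ⟨fun α hc hu hp ht => ?_, fun γ hc hu hp => ⟨?_, fun k => ?_, fun k => ?_, fun k => ?_⟩⟩
  · obtain ⟨γ, hγc, hγu, hγp, hγ⟩ := exists_factor hε hskew hc hu hp ht
    refine ⟨γ, hγc, hγu, hγp, fun k => ?_⟩
    rw [mul_assoc ε⁻¹, mul_assoc ε⁻¹, ← hγ, ← mul_assoc, hεε', one_mul]
  · fun_prop
  · have h : γ (-(k + 1)) = γ (-k) := by rw [← hp]; congr 1; ring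
    rw [h, hp]
  · exact mul_mem (mul_mem (mul_mem hinv (transpose_mem_unitaryGroup (hu _))) hε) (hu _)
  · have hinvT : (ε⁻¹)ᵀ * ε = -1 := by
      rw [transpose_nonsing_inv, hskew]
      have h : (-ε)⁻¹ = -ε⁻¹ := inv_eq_right_inv (by rw [neg_mul_neg, hεε])
      rw [h, neg_mul, hεε']
    simp only [transpose_mul, transpose_transpose, neg_neg, hskew, mul_assoc, hinvT]
    rw [← mul_assoc ε ε⁻¹, hεε, one_mul]
    simp
end
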